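/- Assume |S₀| < n_T, max_{1≤k≤K} |S_k| < n_S, and that the matrices (X⁽ᵏ⁾_{S_k})ᵀX⁽ᵏ⁾_{S_k} (k ∈ [K]) and X̃_{S₀}ᵀX̃_{S₀} are invertible. Then the β-component of the solution of the oracle problem satisfies β̂_{ora,S₀} = [X̃_{S₀}ᵀX̃_{S₀}]⁻¹ X̃_{S₀}ᵀ y and β̂_{ora,S₀ᶜ} = 0, where y is the vertical stack of y⁽⁰⁾, y⁽¹⁾, …, y⁽ᴷ⁾. -/

import Mathlib

/-!
STATEMENT 1 (Proposition 1): If `|S₀| < n_T`, `max_k |S_k| < n_S`, and the Gram matrices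
`(X⁽ᵏ⁾_{S_k})ᵀX⁽ᵏ⁾_{S_k}` and `X̃_{S₀}ᵀX̃_{S₀}` are invertible, then the `β`-component of any
solution of the oracle problem satisfies
`β̂_{ora,S₀} = [X̃_{S₀}ᵀX̃_{S₀}]⁻¹ X̃_{S₀}ᵀ y` and `β̂_{ora,S₀ᶜ} = 0`,
where `y` is the vertical stack of `y⁽⁰⁾, y⁽¹⁾, …, y⁽ᴷ⁾`, `X̃_{S₀}` is the vertical stack of
`X⁽⁰⁾_{S₀}, X̃⁽¹⁾_{S₀}, …, X̃⁽ᴷ⁾_{S₀}`, with `X̃⁽ᵏ⁾_{S₀} = (I − H⁽ᵏ⁾)X⁽ᵏ⁾_{S₀}` and `H⁽ᵏ⁾` the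
projection onto the column space of `X⁽ᵏ⁾_{S_k}`.
-/

open Matrix Finset

/-- Squared ℓ₂ norm. -/
def sqnorm {n : ℕ} (v : Fin n → ℝ) : ℝ := ∑ i, (v i) ^ 2

/-- The column-submatrix of `A` indexed by the set `S`. -/
noncomputable def colSub {n p : ℕ} (A : Matrix (Fin n) (Fin p) ℝ) (S : Finset (Fin p)) :
    Matrix (Fin n) {j // j ∈ S} ℝ :=
  Matrix.of fun i j => A i (j : Fin p)

/-- The projection matrix `H⁽ᵏ⁾` onto the column space of `X⁽ᵏ⁾_{S_k}`. -/
noncomputable def projMat {nS p : ℕ} (Xk : Matrix (Fin nS) (Fin p) ℝ) (Sk : Finset (Fin p)) :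
    Matrix (Fin nS) (Fin nS) ℝ :=
  colSub Xk Sk * ((colSub Xk Sk)ᵀ * colSub Xk Sk)⁻¹ * (colSub Xk Sk)ᵀ

/-- `X̃⁽ᵏ⁾_{S₀} := (I − H⁽ᵏ⁾)X⁽ᵏ⁾_{S₀}`. -/
noncomputable def Xtilde {nS p : ℕ} (Xk : Matrix (Fin nS) (Fin p) ℝ)
    (S0 Sk : Finset (Fin p)) : Matrix (Fin nS) {j // j ∈ S0} ℝ :=
  (1 - projMat Xk Sk) * colSub Xk S0

/-- Vertical stack of a target block (n_T rows) and `K` source blocks (n_S rows each). -/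
def stackM {K nT nS : ℕ} {q : Type*} (A0 : Matrix (Fin nT) q ℝ)
    (As : Fin K → Matrix (Fin nS) q ℝ) : Matrix (Fin nT ⊕ Fin K × Fin nS) q ℝ :=
  Matrix.of fun i j => Sum.elim (fun a => A0 a j) (fun ki => As ki.1 ki.2 j) i

/-- Vertical stack of a target vector and `K` source vectors. -/
def stackV {K nT nS : ℕ} (v0 : Fin nT → ℝ) (vs : Fin K → Fin nS → ℝ) :
    Fin nT ⊕ Fin K × Fin nS → ℝ :=
  Sum.elim v0 fun ki => vs ki.1 ki.2

/-- `X̃_{S₀}`: the vertical stack of `X⁽⁰⁾_{S₀}, X̃⁽¹⁾_{S₀}, …, X̃⁽ᴷ⁾_{S₀}`. -/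
noncomputable def XtildeStack {K nT nS p : ℕ} (X0 : Matrix (Fin nT) (Fin p) ℝ)
    (Xs : Fin K → Matrix (Fin nS) (Fin p) ℝ) (S0 : Finset (Fin p))
    (Ss : Fin K → Finset (Fin p)) : Matrix (Fin nT ⊕ Fin K × Fin nS) {j // j ∈ S0} ℝ :=
  stackM (colSub X0 S0) fun k => Xtilde (Xs k) S0 (Ss k)

/-- The least-squares objective `(1/N) Σ_{k=0}^K ‖y⁽ᵏ⁾ − X⁽ᵏ⁾(β + δ⁽ᵏ⁾)‖₂²` (with `δ⁽⁰⁾ := 0`). -/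
noncomputable def lsObj {K nT nS p : ℕ} (X0 : Matrix (Fin nT) (Fin p) ℝ)
    (Xs : Fin K → Matrix (Fin nS) (Fin p) ℝ) (y0 : Fin nT → ℝ) (ys : Fin K → Fin nS → ℝ)
    (β : Fin p → ℝ) (d : Fin K → Fin p → ℝ) : ℝ :=
  (1 / (K * nS + nT : ℝ)) *
    (sqnorm (y0 - X0 *ᵥ β) + ∑ k, sqnorm (ys k - Xs k *ᵥ (β + d k)))

/-- The oracle constraints `β_{S₀ᶜ} = 0` and `δ⁽ᵏ⁾_{S_kᶜ} = 0` for all `k`. -/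
def oraFeas {K p : ℕ} (S0 : Finset (Fin p)) (Ss : Fin K → Finset (Fin p))
    (β : Fin p → ℝ) (d : Fin K → Fin p → ℝ) : Prop :=
  (∀ j, j ∉ S0 → β j = 0) ∧ ∀ k, ∀ j, j ∉ Ss k → d k j = 0

/-!
This is the Frisch–Waugh–Lovell theorem for the stacked regression. Up to the factor `1/N`, the
oracle objective is the squared norm of `y - (A θ + w)`, where `A` stacks the unadjusted blocks
`X⁽ᵏ⁾_{S₀}` and `w` ranges over the space `W` of fits that the offsets `δ⁽ᵏ⁾` can produce.
Since `X̃ c - A c ∈ W`, moving `θ` along `c` and `w` along `X̃ c - A c` moves the fit exactly along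
`X̃ c`, so at a minimizer the residual is orthogonal to the columns of `X̃`. These columns are
orthogonal to `W`, so in `X̃ᵀ (y - A θ - w) = 0` one may replace `A θ + w` by `X̃ θ`; what remains
are the normal equations of `X̃`.
-/

section LeastSquares

variable {R ι κ : Type*} [Field R] [LinearOrder R] [IsStrictOrderedRing R] [Fintype ι]

lemma dotProduct_eq_zero_of_forall_dotProduct_self_le {r v : ι → R}
    (h : ∀ t : R, r ⬝ᵥ r ≤ (r - t • v) ⬝ᵥ (r - t • v)) : r ⬝ᵥ v = 0 := by
  have hquad : ∀ t : R, 0 ≤ (v ⬝ᵥ v) * (t * t) + (-2 * (r ⬝ᵥ v)) * t + 0 := by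
    intro t
    have ht := h t
    simp only [sub_dotProduct, dotProduct_sub, smul_dotProduct, dotProduct_smul, smul_eq_mul,
      dotProduct_comm v r] at ht
    linarith
  have hdiscrim := discrim_le_zero hquad
  rw [discrim] at hdiscrim
  exact pow_eq_zero_iff two_ne_zero |>.mp (le_antisymm (by linarith) (sq_nonneg (r ⬝ᵥ v)))

theorem normalEquations_of_forall_dotProduct_self_le [Fintype κ] {A Z : Matrix ι κ R}
    {W : Submodule R (ι → R)} (hsub : ∀ c, Z *ᵥ c - A *ᵥ c ∈ W) (horth : ∀ w ∈ W, Zᵀ *ᵥ w = 0)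
    {y : ι → R} {θ : κ → R} {w : ι → R} (hw : w ∈ W)
    (hmin : ∀ θ', ∀ w' ∈ W, (y - (A *ᵥ θ + w)) ⬝ᵥ (y - (A *ᵥ θ + w)) ≤
      (y - (A *ᵥ θ' + w')) ⬝ᵥ (y - (A *ᵥ θ' + w'))) :
    (Zᵀ * Z) *ᵥ θ = Zᵀ *ᵥ y := by
  have hresidual : Zᵀ *ᵥ (y - (A *ᵥ θ + w)) = 0 := by
    refine dotProduct_eq_zero _ fun c => ?_
    rw [mulVec_transpose, ← dotProduct_mulVec]
    refine dotProduct_eq_zero_of_forall_dotProduct_self_le fun t => ?_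
    have hstep : y - (A *ᵥ θ + w) - t • (Z *ᵥ c) =
        y - (A *ᵥ (θ + t • c) + (w + t • (Z *ᵥ c - A *ᵥ c))) := by
      rw [mulVec_add, mulVec_smul, smul_sub]
      abel
    rw [hstep]
    exact hmin _ _ (W.add_mem hw (W.smul_mem t (hsub c)))
  have hreplace : Zᵀ *ᵥ (Z *ᵥ θ - A *ᵥ θ - w) = 0 := horth _ (W.sub_mem (hsub θ) hw)
  have hsplit : y - Z *ᵥ θ = (y - (A *ᵥ θ + w)) - (Z *ᵥ θ - A *ᵥ θ - w) := by abel
  have hprofiled : Zᵀ *ᵥ y - Zᵀ *ᵥ (Z *ᵥ θ) = 0 := by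
    rw [← mulVec_sub, hsplit, mulVec_sub, hresidual, hreplace, sub_zero]
  rw [← mulVec_mulVec]
  exact (sub_eq_zero.mp hprofiled).symm

end LeastSquares

lemma transpose_residualMaker_mul_mul_eq_zero {R m n q : Type*} [CommRing R] [Fintype m]
    [Fintype n] [DecidableEq m] [DecidableEq n] {B : Matrix m n R} (hB : IsUnit (Bᵀ * B).det)
    (A : Matrix m q R) : ((1 - B * (Bᵀ * B)⁻¹ * Bᵀ) * A)ᵀ * B = 0 := by
  have hannihilate : (1 - B * (Bᵀ * B)⁻¹ * Bᵀ) * B = 0 := by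
    rw [Matrix.sub_mul, Matrix.one_mul, Matrix.mul_assoc, nonsing_inv_mul_cancel_right _ _ hB,
      sub_self]
  have hsymm : (1 - B * (Bᵀ * B)⁻¹ * Bᵀ)ᵀ = 1 - B * (Bᵀ * B)⁻¹ * Bᵀ := by
    simp only [transpose_sub, transpose_one, transpose_mul, transpose_nonsing_inv,
      transpose_transpose, Matrix.mul_assoc]
  rw [transpose_mul, hsymm, Matrix.mul_assoc, hannihilate, Matrix.mul_zero]

lemma forall_notMem_eq_zero_iff_exists_extend_zero {α M : Type*} [Zero M] {S : Finset α}
    {b : α → M} :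
    (∀ j, j ∉ S → b j = 0) ↔ ∃ c : {j // j ∈ S} → M, Function.extend Subtype.val c 0 = b := by
  refine ⟨fun hb => ⟨fun j => b j, ?_⟩, ?_⟩
  · ext j
    by_cases hj : j ∈ S
    · exact Subtype.val_injective.extend_apply (fun i : {i // i ∈ S} => b i) 0 ⟨j, hj⟩
    · rw [hb j hj, Function.extend_apply' _ _ _ (by simpa using hj), Pi.zero_apply]
  · rintro ⟨c, rfl⟩ j hj
    rw [Function.extend_apply' _ _ _ (by simpa using hj), Pi.zero_apply]

section ColumnSubmatrix

variable {n p : ℕ}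

lemma mulVec_extend_zero (A : Matrix (Fin n) (Fin p) ℝ) (S : Finset (Fin p))
    (c : {j // j ∈ S} → ℝ) : A *ᵥ Function.extend Subtype.val c 0 = colSub A S *ᵥ c := by
  ext i
  have hoff : ∀ j ∉ S, A i j * Function.extend Subtype.val c 0 j = 0 := fun j hj => by
    simp [Function.extend_apply', hj]
  simp only [mulVec, dotProduct, colSub, of_apply]
  rw [← sum_subset (subset_univ S) fun j _ hj => hoff j hj, ← sum_coe_sort S]
  exact sum_congr rfl fun j _ => by rw [Subtype.val_injective.extend_apply]

lemma Xtilde_transpose_mulVec_colSub_mulVec {X : Matrix (Fin n) (Fin p) ℝ} {S : Finset (Fin p)}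
    (hS : IsUnit ((colSub X S)ᵀ * colSub X S).det) (S0 : Finset (Fin p))
    (η : {j // j ∈ S} → ℝ) : (Xtilde X S0 S)ᵀ *ᵥ (colSub X S *ᵥ η) = 0 := by
  rw [mulVec_mulVec, Xtilde, projMat, transpose_residualMaker_mul_mul_eq_zero hS, zero_mulVec]

lemma exists_Xtilde_mulVec_sub_eq (X : Matrix (Fin n) (Fin p) ℝ) (S0 S : Finset (Fin p))
    (c : {j // j ∈ S0} → ℝ) :
    ∃ η, Xtilde X S0 S *ᵥ c - colSub X S0 *ᵥ c = colSub X S *ᵥ η := by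
  refine ⟨-(((colSub X S)ᵀ * colSub X S)⁻¹ *ᵥ ((colSub X S)ᵀ *ᵥ (colSub X S0 *ᵥ c))), ?_⟩
  simp only [Xtilde, projMat, Matrix.sub_mul, Matrix.one_mul, sub_mulVec, mulVec_neg,
    mulVec_mulVec, Matrix.mul_assoc]
  abel

end ColumnSubmatrix

section Stack

variable {K nT nS : ℕ} {q : Type*}

lemma stackM_mulVec [Fintype q] (A0 : Matrix (Fin nT) q ℝ) (As : Fin K → Matrix (Fin nS) q ℝ)
    (c : q → ℝ) : stackM A0 As *ᵥ c = stackV (A0 *ᵥ c) fun k => As k *ᵥ c := by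
  ext (_ | _) <;> rfl

lemma stackM_transpose_mulVec_stackV (A0 : Matrix (Fin nT) q ℝ)
    (As : Fin K → Matrix (Fin nS) q ℝ) (v0 : Fin nT → ℝ) (vs : Fin K → Fin nS → ℝ) :
    (stackM A0 As)ᵀ *ᵥ stackV v0 vs = A0ᵀ *ᵥ v0 + ∑ k, (As k)ᵀ *ᵥ vs k := by
  ext j
  simp [mulVec, dotProduct, stackM, stackV, Fintype.sum_sum_type, Fintype.sum_prod_type]

lemma stackV_add (v0 w0 : Fin nT → ℝ) (vs ws : Fin K → Fin nS → ℝ) :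
    stackV v0 vs + stackV w0 ws = stackV (v0 + w0) (vs + ws) := by
  ext (_ | _) <;> rfl

lemma stackV_sub (v0 w0 : Fin nT → ℝ) (vs ws : Fin K → Fin nS → ℝ) :
    stackV v0 vs - stackV w0 ws = stackV (v0 - w0) (vs - ws) := by
  ext (_ | _) <;> rfl

lemma smul_stackV (t : ℝ) (v0 : Fin nT → ℝ) (vs : Fin K → Fin nS → ℝ) :
    t • stackV v0 vs = stackV (t • v0) (t • vs) := by
  ext (_ | _) <;> rfl

lemma stackV_dotProduct_self (v0 : Fin nT → ℝ) (vs : Fin K → Fin nS → ℝ) :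
    stackV v0 vs ⬝ᵥ stackV v0 vs = sqnorm v0 + ∑ k, sqnorm (vs k) := by
  simp [dotProduct, stackV, sqnorm, Fintype.sum_sum_type, Fintype.sum_prod_type, sq]

end Stack

section Oracle

variable {K nT nS p : ℕ}

/-- The stacked fitted values `X⁽⁰⁾β, X⁽¹⁾(β + δ⁽¹⁾), …, X⁽ᴷ⁾(β + δ⁽ᴷ⁾)`, so that the oracle
problem becomes one least-squares problem for the stacked response. -/
def stackedFit (X0 : Matrix (Fin nT) (Fin p) ℝ) (Xs : Fin K → Matrix (Fin nS) (Fin p) ℝ)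
    (β : Fin p → ℝ) (d : Fin K → Fin p → ℝ) : Fin nT ⊕ Fin K × Fin nS → ℝ :=
  stackV (X0 *ᵥ β) fun k => Xs k *ᵥ (β + d k)

/-- The space of stacked fitted values that the offsets `δ⁽ᵏ⁾` supported on `S_k` produce on their
own; it is the nuisance space that is projected out of the design. -/
noncomputable def offsetSpace (nT : ℕ) (Xs : Fin K → Matrix (Fin nS) (Fin p) ℝ)
    (Ss : Fin K → Finset (Fin p)) :
    Submodule ℝ (Fin nT ⊕ Fin K × Fin nS → ℝ) :=
  LinearMap.range
    { toFun := fun η : ∀ k, {j // j ∈ Ss k} → ℝ =>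
        stackV 0 fun k => colSub (Xs k) (Ss k) *ᵥ η k
      map_add' := fun η η' => by
        rw [stackV_add, add_zero]
        exact congrArg _ (funext fun k => mulVec_add _ (η k) (η' k))
      map_smul' := fun t η => by
        rw [RingHom.id_apply, smul_stackV, smul_zero]
        exact congrArg _ (funext fun k => mulVec_smul _ t (η k)) }

lemma mem_offsetSpace {Xs : Fin K → Matrix (Fin nS) (Fin p) ℝ} {Ss : Fin K → Finset (Fin p)}
    {w : Fin nT ⊕ Fin K × Fin nS → ℝ} :
    w ∈ offsetSpace nT Xs Ss ↔
      ∃ η : ∀ k, {j // j ∈ Ss k} → ℝ, stackV 0 (fun k => colSub (Xs k) (Ss k) *ᵥ η k) = w :=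
  Iff.rfl

lemma XtildeStack_transpose_mulVec_eq_zero (X0 : Matrix (Fin nT) (Fin p) ℝ)
    {Xs : Fin K → Matrix (Fin nS) (Fin p) ℝ} (S0 : Finset (Fin p)) {Ss : Fin K → Finset (Fin p)}
    (hSs : ∀ k, IsUnit ((colSub (Xs k) (Ss k))ᵀ * colSub (Xs k) (Ss k)).det)
    {w : Fin nT ⊕ Fin K × Fin nS → ℝ} (hw : w ∈ offsetSpace nT Xs Ss) :
    (XtildeStack X0 Xs S0 Ss)ᵀ *ᵥ w = 0 := by
  obtain ⟨η, rfl⟩ := mem_offsetSpace.mp hw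
  rw [XtildeStack, stackM_transpose_mulVec_stackV, mulVec_zero, zero_add]
  exact sum_eq_zero fun k _ => Xtilde_transpose_mulVec_colSub_mulVec (hSs k) S0 (η k)

lemma XtildeStack_mulVec_sub_mem_offsetSpace (X0 : Matrix (Fin nT) (Fin p) ℝ)
    (Xs : Fin K → Matrix (Fin nS) (Fin p) ℝ) (S0 : Finset (Fin p)) (Ss : Fin K → Finset (Fin p))
    (c : {j // j ∈ S0} → ℝ) :
    XtildeStack X0 Xs S0 Ss *ᵥ c - stackM (colSub X0 S0) (fun k => colSub (Xs k) S0) *ᵥ c ∈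
      offsetSpace nT Xs Ss := by
  choose η hη using fun k => exists_Xtilde_mulVec_sub_eq (Xs k) S0 (Ss k) c
  refine mem_offsetSpace.mpr ⟨η, ?_⟩
  rw [XtildeStack, stackM_mulVec, stackM_mulVec, stackV_sub, sub_self]
  exact congrArg _ (funext fun k => (hη k).symm)

lemma stackedFit_extend_zero (X0 : Matrix (Fin nT) (Fin p) ℝ)
    (Xs : Fin K → Matrix (Fin nS) (Fin p) ℝ) {S0 : Finset (Fin p)} {Ss : Fin K → Finset (Fin p)}
    (θ : {j // j ∈ S0} → ℝ) (η : ∀ k, {j // j ∈ Ss k} → ℝ) :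
    stackedFit X0 Xs (Function.extend Subtype.val θ 0)
        (fun k => Function.extend Subtype.val (η k) 0) =
      stackM (colSub X0 S0) (fun k => colSub (Xs k) S0) *ᵥ θ +
        stackV 0 fun k => colSub (Xs k) (Ss k) *ᵥ η k := by
  simp only [stackedFit, stackM_mulVec, stackV_add, mulVec_add, mulVec_extend_zero, add_zero]
  rfl

lemma oraFeas_iff_exists_extend_zero {S0 : Finset (Fin p)} {Ss : Fin K → Finset (Fin p)}
    {β : Fin p → ℝ} {d : Fin K → Fin p → ℝ} :
    oraFeas S0 Ss β d ↔
      ∃ (θ : {j // j ∈ S0} → ℝ) (η : ∀ k, {j // j ∈ Ss k} → ℝ),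
        Function.extend Subtype.val θ 0 = β ∧
          (fun k => Function.extend Subtype.val (η k) 0) = d := by
  simp only [oraFeas, forall_notMem_eq_zero_iff_exists_extend_zero, Classical.skolem,
    exists_and_left, exists_and_right, funext_iff]

lemma lsObj_eq_card_inv_mul_dotProduct_self (X0 : Matrix (Fin nT) (Fin p) ℝ)
    (Xs : Fin K → Matrix (Fin nS) (Fin p) ℝ) (y0 : Fin nT → ℝ) (ys : Fin K → Fin nS → ℝ)
    (β : Fin p → ℝ) (d : Fin K → Fin p → ℝ) :
    lsObj X0 Xs y0 ys β d = (Fintype.card (Fin nT ⊕ Fin K × Fin nS) : ℝ)⁻¹ *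
      ((stackV y0 ys - stackedFit X0 Xs β d) ⬝ᵥ (stackV y0 ys - stackedFit X0 Xs β d)) := by
  rw [stackedFit, stackV_sub, stackV_dotProduct_self, lsObj, one_div]
  simp [add_comm]

lemma lsObj_le_lsObj_iff {X0 : Matrix (Fin nT) (Fin p) ℝ}
    {Xs : Fin K → Matrix (Fin nS) (Fin p) ℝ} {y0 : Fin nT → ℝ} {ys : Fin K → Fin nS → ℝ}
    {β β' : Fin p → ℝ} {d d' : Fin K → Fin p → ℝ} :
    lsObj X0 Xs y0 ys β d ≤ lsObj X0 Xs y0 ys β' d' ↔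
      (stackV y0 ys - stackedFit X0 Xs β d) ⬝ᵥ (stackV y0 ys - stackedFit X0 Xs β d) ≤
        (stackV y0 ys - stackedFit X0 Xs β' d') ⬝ᵥ (stackV y0 ys - stackedFit X0 Xs β' d') := by
  rw [lsObj_eq_card_inv_mul_dotProduct_self, lsObj_eq_card_inv_mul_dotProduct_self]
  cases isEmpty_or_nonempty (Fin nT ⊕ Fin K × Fin nS)
  -- Without observations the factor `1/N` is the junk value `0`, but the residuals are empty too.
  · simp only [dotProduct_of_isEmpty, mul_zero]
  · exact mul_le_mul_iff_of_pos_left (inv_pos.mpr (Nat.cast_pos.mpr Fintype.card_pos))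

end Oracle

theorem statement_1_general {K nT nS p : ℕ}
    (X0 : Matrix (Fin nT) (Fin p) ℝ) (Xs : Fin K → Matrix (Fin nS) (Fin p) ℝ)
    (y0 : Fin nT → ℝ) (ys : Fin K → Fin nS → ℝ)
    (S0 : Finset (Fin p)) (Ss : Fin K → Finset (Fin p))
    (hinvk : ∀ k, IsUnit ((colSub (Xs k) (Ss k))ᵀ * colSub (Xs k) (Ss k)).det)
    (hinvt : IsUnit ((XtildeStack X0 Xs S0 Ss)ᵀ * XtildeStack X0 Xs S0 Ss).det)
    (βhat : Fin p → ℝ) (dhat : Fin K → Fin p → ℝ)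
    (hfeas : oraFeas S0 Ss βhat dhat)
    (hmin : ∀ (β' : Fin p → ℝ) (d' : Fin K → Fin p → ℝ), oraFeas S0 Ss β' d' →
      lsObj X0 Xs y0 ys βhat dhat ≤ lsObj X0 Xs y0 ys β' d') :
    (∀ j (hj : j ∈ S0),
      βhat j = ((((XtildeStack X0 Xs S0 Ss)ᵀ * XtildeStack X0 Xs S0 Ss)⁻¹
          * (XtildeStack X0 Xs S0 Ss)ᵀ) *ᵥ stackV y0 ys) ⟨j, hj⟩) ∧
    (∀ j, j ∉ S0 → βhat j = 0) := by
  refine ⟨fun j hj => ?_, hfeas.1⟩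
  obtain ⟨θ, η, rfl, rfl⟩ := oraFeas_iff_exists_extend_zero.mp hfeas
  have hnormal : ((XtildeStack X0 Xs S0 Ss)ᵀ * XtildeStack X0 Xs S0 Ss) *ᵥ θ =
      (XtildeStack X0 Xs S0 Ss)ᵀ *ᵥ stackV y0 ys := by
    refine normalEquations_of_forall_dotProduct_self_le
      (XtildeStack_mulVec_sub_mem_offsetSpace X0 Xs S0 Ss)
      (fun _ => XtildeStack_transpose_mulVec_eq_zero X0 S0 hinvk)
      (mem_offsetSpace.mpr ⟨η, rfl⟩) fun θ' w' hw' => ?_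
    obtain ⟨η', rfl⟩ := mem_offsetSpace.mp hw'
    rw [← stackedFit_extend_zero, ← stackedFit_extend_zero, ← lsObj_le_lsObj_iff]
    exact hmin _ _ (oraFeas_iff_exists_extend_zero.mpr ⟨θ', η', rfl, rfl⟩)
  rw [← mulVec_mulVec, ← hnormal, mulVec_mulVec, nonsing_inv_mul _ hinvt, one_mulVec]
  exact Subtype.val_injective.extend_apply θ 0 ⟨j, hj⟩

theorem statement_1 {K nT nS p : ℕ}
    (X0 : Matrix (Fin nT) (Fin p) ℝ) (Xs : Fin K → Matrix (Fin nS) (Fin p) ℝ)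
    (β0 : Fin p → ℝ) (δ : Fin K → Fin p → ℝ)
    (e0 : Fin nT → ℝ) (es : Fin K → Fin nS → ℝ)
    (y0 : Fin nT → ℝ) (ys : Fin K → Fin nS → ℝ)
    (hy0 : y0 = X0 *ᵥ β0 + e0) (hys : ∀ k, ys k = Xs k *ᵥ (β0 + δ k) + es k)
    (S0 : Finset (Fin p)) (Ss : Fin K → Finset (Fin p))
    (hS0 : ∀ j, j ∈ S0 ↔ β0 j ≠ 0) (hSs : ∀ k j, j ∈ Ss k ↔ δ k j ≠ 0)
    (hcard0 : S0.card < nT) (hcards : ∀ k, (Ss k).card < nS)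
    (hinvk : ∀ k, IsUnit ((colSub (Xs k) (Ss k))ᵀ * colSub (Xs k) (Ss k)).det)
    (hinvt : IsUnit ((XtildeStack X0 Xs S0 Ss)ᵀ * XtildeStack X0 Xs S0 Ss).det)
    (βhat : Fin p → ℝ) (dhat : Fin K → Fin p → ℝ)
    (hfeas : oraFeas S0 Ss βhat dhat)
    (hmin : ∀ (β' : Fin p → ℝ) (d' : Fin K → Fin p → ℝ), oraFeas S0 Ss β' d' →
      lsObj X0 Xs y0 ys βhat dhat ≤ lsObj X0 Xs y0 ys β' d') :
    (∀ j (hj : j ∈ S0),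
      βhat j = ((((XtildeStack X0 Xs S0 Ss)ᵀ * XtildeStack X0 Xs S0 Ss)⁻¹
          * (XtildeStack X0 Xs S0 Ss)ᵀ) *ᵥ stackV y0 ys) ⟨j, hj⟩) ∧
    (∀ j, j ∉ S0 → βhat j = 0) :=
  statement_1_general X0 Xs y0 ys S0 Ss hinvk hinvt βhat dhat hfeas hmin
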